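/- Let m and n be finite index types and let ρ, τ : Matrix (m × n) (m × n) ℂ. Suppose both marginals of ρ and τ agree: for all i, i' : m, ∑_{j : n} ρ((i,j),(i',j)) = ∑_{j : n} τ((i,j),(i',j)), and for all j, j' : n, ∑_{i : m} ρ((i,j),(i,j')) = ∑_{i : m} τ((i,j),(i,j')). Then for every local Hamiltonian of the form H = H_A ⊗ₖ 1 + 1 ⊗ₖ H_B with H_A : Matrix m m ℂ and H_B : Matrix n n ℂ, the energies agree: trace(H * ρ) = trace(H * τ). -/

import Mathlib

open Matrix
open scoped Kronecker

/-!
The partial trace preserves the trace and is linear over operators acting only on the remaining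
factor: `tr₂ ((A ⊗ 1) ρ) = A (tr₂ ρ)`. Each local term of the Hamiltonian therefore has an energy
that depends only on the corresponding marginal of the state.
-/

section PartialTrace

variable {k l m n R : Type*}

/-- The partial trace over the second tensor factor, as a matrix on the first; it represents the
marginal of a state on the first subsystem. Rows and columns of the remaining factor may have
different index types. -/
def partialTraceRight [Fintype n] [AddCommMonoid R] (M : Matrix (l × n) (m × n) R) :
    Matrix l m R :=
  of fun i i' => ∑ j, M (i, j) (i', j)

/-- The partial trace over the first tensor factor, as a matrix on the second; it represents the
marginal of a state on the second subsystem. Rows and columns of the remaining factor may have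
different index types. -/
def partialTraceLeft [Fintype n] [AddCommMonoid R] (M : Matrix (n × l) (n × m) R) :
    Matrix l m R :=
  of fun j j' => ∑ i, M (i, j) (i, j')

theorem trace_partialTraceRight [Fintype m] [Fintype n] [AddCommMonoid R]
    (M : Matrix (m × n) (m × n) R) : (partialTraceRight M).trace = M.trace :=
  (Fintype.sum_prod_type M.diag).symm

theorem trace_partialTraceLeft [Fintype m] [Fintype n] [AddCommMonoid R]
    (M : Matrix (m × n) (m × n) R) : (partialTraceLeft M).trace = M.trace :=
  (Fintype.sum_prod_type_right M.diag).symm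

theorem kronecker_one_mul_apply [Fintype l] [Fintype n] [DecidableEq n] [NonAssocSemiring R]
    (A : Matrix k l R) (M : Matrix (l × n) m R) (i : k) (j : n) (q : m) :
    ((A ⊗ₖ (1 : Matrix n n R)) * M) (i, j) q = ∑ i', A i i' * M (i', j) q := by
  simp only [mul_apply, Fintype.sum_prod_type, kroneckerMap_apply, one_apply, mul_ite, mul_one,
    mul_zero, ite_mul, zero_mul, Finset.sum_ite_eq, Finset.mem_univ, if_true]

theorem one_kronecker_mul_apply [Fintype l] [Fintype n] [DecidableEq n] [NonAssocSemiring R]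
    (B : Matrix k l R) (M : Matrix (n × l) m R) (i : n) (j : k) (q : m) :
    (((1 : Matrix n n R) ⊗ₖ B) * M) (i, j) q = ∑ j', B j j' * M (i, j') q := by
  simp only [mul_apply, Fintype.sum_prod_type_right, kroneckerMap_apply, one_apply, ite_mul,
    one_mul, zero_mul, Finset.sum_ite_eq, Finset.mem_univ, if_true]

theorem partialTraceRight_kronecker_one_mul [Fintype l] [Fintype n] [DecidableEq n]
    [NonAssocSemiring R] (A : Matrix k l R) (M : Matrix (l × n) (m × n) R) :
    partialTraceRight ((A ⊗ₖ (1 : Matrix n n R)) * M) = A * partialTraceRight M := by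
  ext i i'
  simp only [partialTraceRight, of_apply, kronecker_one_mul_apply, mul_apply (M := A),
    Finset.mul_sum]
  exact Finset.sum_comm

theorem partialTraceLeft_one_kronecker_mul [Fintype l] [Fintype n] [DecidableEq n]
    [NonAssocSemiring R] (B : Matrix k l R) (M : Matrix (n × l) (n × m) R) :
    partialTraceLeft (((1 : Matrix n n R) ⊗ₖ B) * M) = B * partialTraceLeft M := by
  ext j j'
  simp only [partialTraceLeft, of_apply, one_kronecker_mul_apply, mul_apply (M := B),
    Finset.mul_sum]
  exact Finset.sum_comm

theorem trace_kronecker_one_mul [Fintype l] [Fintype m] [Fintype n] [DecidableEq n]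
    [NonAssocSemiring R] (A : Matrix m l R) (M : Matrix (l × n) (m × n) R) :
    ((A ⊗ₖ (1 : Matrix n n R)) * M).trace = (A * partialTraceRight M).trace := by
  rw [← trace_partialTraceRight, partialTraceRight_kronecker_one_mul]

theorem trace_one_kronecker_mul [Fintype l] [Fintype m] [Fintype n] [DecidableEq n]
    [NonAssocSemiring R] (B : Matrix m l R) (M : Matrix (n × l) (n × m) R) :
    (((1 : Matrix n n R) ⊗ₖ B) * M).trace = (B * partialTraceLeft M).trace := by
  rw [← trace_partialTraceLeft, partialTraceLeft_one_kronecker_mul]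

theorem energy_eq_of_marginals_eq_general [Fintype m] [Fintype n] [DecidableEq m] [DecidableEq n]
    [NonAssocSemiring R] {ρ τ : Matrix (m × n) (m × n) R}
    (hright : partialTraceRight ρ = partialTraceRight τ)
    (hleft : partialTraceLeft ρ = partialTraceLeft τ) (A : Matrix m m R) (B : Matrix n n R) :
    ((A ⊗ₖ (1 : Matrix n n R) + (1 : Matrix m m R) ⊗ₖ B) * ρ).trace =
      ((A ⊗ₖ (1 : Matrix n n R) + (1 : Matrix m m R) ⊗ₖ B) * τ).trace := by
  simp only [Matrix.add_mul, trace_add, trace_kronecker_one_mul, trace_one_kronecker_mul,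
    hright, hleft]

end PartialTrace

/-- If both marginals (partial traces over each tensor factor) of `ρ` and `τ` agree,
then the energies with respect to any local Hamiltonian `H_A ⊗ₖ 1 + 1 ⊗ₖ H_B` agree. -/
theorem energy_eq_of_marginals_eq
    {m n : Type*} [Fintype m] [Fintype n] [DecidableEq m] [DecidableEq n]
    (ρ τ : Matrix (m × n) (m × n) ℂ)
    (h₁ : ∀ i i' : m, ∑ j : n, ρ (i, j) (i', j) = ∑ j : n, τ (i, j) (i', j))
    (h₂ : ∀ j j' : n, ∑ i : m, ρ (i, j) (i, j') = ∑ i : m, τ (i, j) (i, j')) :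
    ∀ (H_A : Matrix m m ℂ) (H_B : Matrix n n ℂ),
      ((H_A ⊗ₖ (1 : Matrix n n ℂ) + (1 : Matrix m m ℂ) ⊗ₖ H_B) * ρ).trace =
        ((H_A ⊗ₖ (1 : Matrix n n ℂ) + (1 : Matrix m m ℂ) ⊗ₖ H_B) * τ).trace :=
  energy_eq_of_marginals_eq_general (Matrix.ext h₁) (Matrix.ext h₂)
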